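/- Fix 0 < λ < Λ < ∞. Then there exist a natural number N, unit vectors ζ₁, …, ζ_N ∈ 𝕆², each having at least one coordinate that is a real multiple of the unit 1 ∈ 𝕆 and with the list containing the vectors (1,0) and (0,1), and constants 0 < λ* < Λ* < ∞ depending only on λ and Λ, such that every octonionic Hermitian 2×2 matrix A = (α, β, q) whose spectrum (the two real roots of t² − (α+β)·t + det A) lies in [λ, Λ] can be written as A = Σ_{k=1}^{N} β_k·(ζ_k ⊗ ζ_k*) with all β_k ∈ [λ*, Λ*]. (Proposition 16.4.) -/

import Mathlib

noncomputable section

open scoped Quaternion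

/-- The octonions, realized as pairs of quaternions (Cayley–Dickson). -/
abbrev Oct : Type := ℍ[ℝ] × ℍ[ℝ]

/-- Octonionic multiplication: (x,y)·(w,z) = (xw − z̄y, zx + yw̄). -/
def omul (a b : Oct) : Oct :=
  (a.1 * b.1 - star b.2 * a.2, b.2 * a.1 + a.2 * star b.1)

/-- Octonionic conjugation. -/
def oconj (a : Oct) : Oct := (star a.1, -a.2)

/-- Real part of an octonion. -/
def oRe (a : Oct) : ℝ := a.1.re

/-- Squared norm |q|² = Re(q·q̄). -/
def onSq (a : Oct) : ℝ := oRe (omul a (oconj a))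

/-- Octonionic Hermitian 2×2 matrix: (α, β, q) represents [[α, q],[q̄, β]]. -/
abbrev Herm : Type := ℝ × ℝ × Oct

/-- Determinant of an octonionic Hermitian 2×2 matrix. -/
def detH (A : Herm) : ℝ := A.1 * A.2.1 - onSq A.2.2

/-- The quadratic form ξ ↦ Re(ξ*Aξ). -/
def qform (A : Herm) (ξ : Oct × Oct) : ℝ :=
  A.1 * onSq ξ.1 + A.2.1 * onSq ξ.2 + 2 * oRe (omul (oconj ξ.1) (omul A.2.2 ξ.2))

/-- Positive definiteness. -/
def PosDefH (A : Herm) : Prop := ∀ ξ : Oct × Oct, ξ ≠ 0 → 0 < qform A ξ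

/-- Nonnegative definiteness. -/
def NonnegDefH (A : Herm) : Prop := ∀ ξ : Oct × Oct, 0 ≤ qform A ξ

/-- Embedding of ℝ into the octonions. -/
def oR (r : ℝ) : Oct := ((r : ℍ[ℝ]), 0)

/-- The rank-one octonionic Hermitian matrix ζ ⊗ ζ* = (|ζ₁|², |ζ₂|², ζ₁·conj(ζ₂)). -/
def outerH (ζ : Oct × Oct) : Herm := (onSq ζ.1, onSq ζ.2, omul ζ.1 (oconj ζ.2))

/-!
Completing the square writes a positive definite octonionic Hermitian matrix as a nonnegative
combination of two rank-one matrices, each coming from a vector with a real coordinate. The open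
set of positive definite matrices therefore lies in the interior of the cone generated by the
admissible rank-one matrices. A point in the interior of a cone is in the interior of a finitely
generated subcone (that of a small simplex around it), so by compactness finitely many generators
serve a whole compact set `K` of positive definite matrices. For finitely many generators, an
interior point of the cone stays in the cone after subtracting a small multiple of the sum of all
generators, so it has a representation with all coefficients positive. The images of the open boxes
`(1/n, n)^N` are open and increasing, hence one of them contains `K`.
The matrices with spectrum in `[λ, Λ]` form a compact set, their eigenvalues controlling the norm.
-/

open Set Filter Topology PointedCone

section ConicHull

variable {ι E : Type*}

lemma exists_nat_forall_mem_Ioo_inv [Finite ι] {c : ι → ℝ} (hc : ∀ i, 0 < c i) :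
    ∃ n : ℕ, ∀ i, c i ∈ Ioo ((n : ℝ) + 2)⁻¹ (n + 2) := by
  have hlarge : Tendsto (fun n : ℕ => (n : ℝ) + 2) atTop atTop :=
    tendsto_natCast_atTop_atTop.atTop_add tendsto_const_nhds
  have hsmall : Tendsto (fun n : ℕ => ((n : ℝ) + 2)⁻¹) atTop (𝓝 0) :=
    tendsto_inv_atTop_zero.comp hlarge
  exact (eventually_all.2 fun i =>
    (hsmall.eventually_lt_const (hc i)).and (hlarge.eventually_gt_atTop (c i))).exists
section Topological

variable [AddCommGroup E] [Module ℝ E] [TopologicalSpace E]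

lemma monotone_interior_hull_image (v : ι → E) :
    Monotone fun t : Finset ι => interior (hull ℝ (v '' t) : Set E) := fun _ _ hst =>
  interior_mono (Submodule.span_mono (image_mono (Finset.coe_subset.2 hst)))

variable [IsTopologicalAddGroup E] [ContinuousSMul ℝ E]

lemma exists_pos_sum_smul_eq_of_mem_interior_hull [Fintype ι] {v : ι → E} {x : E}
    (hx : x ∈ interior (hull ℝ (range v) : Set E)) :
    ∃ c : ι → ℝ, (∀ i, 0 < c i) ∧ x = ∑ i, c i • v i := by
  have hcont : ContinuousAt (fun ε : ℝ => x - ε • ∑ i, v i) 0 := by fun_prop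
  have hnear : ∀ᶠ ε in 𝓝[>] (0 : ℝ), x - ε • ∑ i, v i ∈ hull ℝ (range v) :=
    nhdsWithin_le_nhds (hcont.eventually_mem (by simpa using mem_interior_iff_mem_nhds.1 hx))
  obtain ⟨ε, hεmem, hε⟩ := (hnear.and self_mem_nhdsWithin).exists
  obtain ⟨d, hd⟩ := (Submodule.mem_span_range_iff_exists_fun _).1 hεmem
  refine ⟨fun i => d i + ε, fun i => add_pos_of_nonneg_of_pos (d i).2 hε, ?_⟩
  have hd' : ∑ i, (d i : ℝ) • v i = x - ε • ∑ i, v i := hd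
  simp only [add_smul, Finset.sum_add_distrib, ← Finset.smul_sum, hd', sub_add_cancel]

lemma surjective_linearCombination_of_interior_hull_nonempty [Fintype ι] {v : ι → E}
    (h : (interior (hull ℝ (range v) : Set E)).Nonempty) :
    Function.Surjective (Fintype.linearCombination ℝ v) := by
  rw [← LinearMap.range_eq_top, Fintype.range_linearCombination]
  refine Submodule.eq_top_of_nonempty_interior' _ (h.mono (interior_mono ?_))
  exact Submodule.span_subset_span _ _ _

lemma exists_sum_smul_eq_coeff_mem_Icc_of_isCompact [T2Space E] [FiniteDimensional ℝ E] [Fintype ι]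
    {v : ι → E} {K : Set E} (hK : IsCompact K) (hKv : K ⊆ interior (hull ℝ (range v) : Set E)) :
    ∃ m M : ℝ, 0 < m ∧ m < M ∧
      ∀ x ∈ K, ∃ c : ι → ℝ, (∀ i, c i ∈ Icc m M) ∧ x = ∑ i, c i • v i := by
  rcases K.eq_empty_or_nonempty with rfl | hne
  · exact ⟨1, 2, by simp⟩
  let box (n : ℕ) : Set (ι → ℝ) := univ.pi fun _ => Ioo ((n : ℝ) + 2)⁻¹ (n + 2)
  have hopen : ∀ n, IsOpen (Fintype.linearCombination ℝ v '' box n) := fun n =>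
    LinearMap.isOpenMap_of_finiteDimensional _
      (surjective_linearCombination_of_interior_hull_nonempty (hne.mono hKv)) _
      (isOpen_set_pi finite_univ fun _ _ => isOpen_Ioo)
  have hmono : Monotone fun n => Fintype.linearCombination ℝ v '' box n := fun m n hmn =>
    image_mono (pi_mono fun _ _ => Ioo_subset_Ioo (by gcongr) (by gcongr))
  have hcover : K ⊆ ⋃ n, Fintype.linearCombination ℝ v '' box n := by
    intro x hx
    obtain ⟨c, hc, rfl⟩ := exists_pos_sum_smul_eq_of_mem_interior_hull (hKv hx)
    obtain ⟨n, hn⟩ := exists_nat_forall_mem_Ioo_inv hc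
    exact mem_iUnion.2 ⟨n, c, fun i _ => hn i, rfl⟩
  obtain ⟨n, hn⟩ := hK.elim_directed_cover _ hopen hcover hmono.directed_le
  refine ⟨((n : ℝ) + 2)⁻¹, n + 2, by positivity, ?_, fun x hx => ?_⟩
  · exact (inv_lt_one_of_one_lt₀ (by linarith)).trans (by linarith)
  · obtain ⟨c, hc, rfl⟩ := hn hx
    exact ⟨c, fun i => Ioo_subset_Icc_self (hc i (mem_univ i)), rfl⟩

end Topological

section Normed

variable [NormedAddCommGroup E] [NormedSpace ℝ E] [FiniteDimensional ℝ E]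

lemma exists_finset_mem_interior_hull {v : ι → E} {x : E}
    (hx : x ∈ interior (hull ℝ (range v) : Set E)) :
    ∃ t : Finset ι, x ∈ interior (hull ℝ (v '' t) : Set E) := by
  classical
  obtain ⟨b, hxb, hb⟩ := exists_mem_interior_convexHull_affineBasis (mem_interior_iff_mem_nhds.1 hx)
  have hvert : ((Finset.univ.image b : Finset E) : Set E) ⊆ hull ℝ (range v) := by
    simpa using (subset_convexHull ℝ _).trans hb
  obtain ⟨T, hTv, hbT⟩ := Submodule.subset_span_finite_of_subset_span hvert
  obtain ⟨t, -, rfl⟩ := Finset.subset_set_image_iff.1 (image_univ.symm ▸ hTv)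
  have hbt : convexHull ℝ (range b) ⊆ hull ℝ (v '' t) :=
    convexHull_min (by simpa using hbT) (PointedCone.convex _)
  exact ⟨t, interior_mono hbt hxb⟩

lemma exists_finset_subset_interior_hull_of_isCompact {v : ι → E} {K : Set E}
    (hK : IsCompact K) (hKv : K ⊆ interior (hull ℝ (range v) : Set E)) :
    ∃ t : Finset ι, K ⊆ interior (hull ℝ (v '' t) : Set E) :=
  hK.elim_directed_cover _ (fun _ => isOpen_interior)
    (fun _ hx => mem_iUnion.2 (exists_finset_mem_interior_hull (hKv hx)))
    (monotone_interior_hull_image v).directed_le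

lemma exists_fin_sum_smul_eq_coeff_mem_Icc_of_isCompact {v : ι → E} {K : Set E} (S : Finset ι)
    (hK : IsCompact K) (hKv : K ⊆ interior (hull ℝ (range v) : Set E)) :
    ∃ (N : ℕ) (f : Fin N → ι) (m M : ℝ), 0 < m ∧ m < M ∧ (∀ i ∈ S, ∃ k, f k = i) ∧
      ∀ x ∈ K, ∃ c : Fin N → ℝ, (∀ k, c k ∈ Icc m M) ∧ x = ∑ k, c k • v (f k) := by
  classical
  obtain ⟨t, ht⟩ := exists_finset_subset_interior_hull_of_isCompact hK hKv
  let e := (S ∪ t).equivFin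
  have hrange : range (fun k => v (e.symm k)) = v '' (S ∪ t : Finset ι) := by
    rw [← Subtype.range_coe (s := ((S ∪ t : Finset ι) : Set ι)), ← range_comp,
      ← e.symm.surjective.range_comp]
    rfl
  have hKt : K ⊆ interior (hull ℝ (range fun k => v (e.symm k)) : Set E) := by
    rw [hrange]
    exact ht.trans (monotone_interior_hull_image v Finset.subset_union_right)
  obtain ⟨m, M, hm, hmM, hc⟩ := exists_sum_smul_eq_coeff_mem_Icc_of_isCompact hK hKt
  exact ⟨_, fun k => e.symm k, m, M, hm, hmM,
    fun i hi => ⟨e ⟨i, Finset.mem_union_left t hi⟩, by simp⟩, hc⟩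

end Normed

end ConicHull

section Octonions

lemma onSq_eq_norm_sq_add_norm_sq (a : Oct) : onSq a = ‖a.1‖ ^ 2 + ‖a.2‖ ^ 2 := by
  simp [sq, ← Quaternion.normSq_eq_norm_mul_self, Quaternion.normSq_def', onSq, oRe, omul, oconj]

lemma onSq_nonneg (a : Oct) : 0 ≤ onSq a := by
  rw [onSq_eq_norm_sq_add_norm_sq]; positivity

lemma onSq_eq_zero {a : Oct} : onSq a = 0 ↔ a = 0 := by
  rw [onSq_eq_norm_sq_add_norm_sq, add_eq_zero_iff_of_nonneg (by positivity) (by positivity)]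
  simp [Prod.ext_iff]

lemma onSq_zero : onSq 0 = 0 :=
  onSq_eq_zero.2 rfl

lemma onSq_pos {a : Oct} : 0 < onSq a ↔ a ≠ 0 := by
  rw [(onSq_nonneg a).lt_iff_ne', Ne, onSq_eq_zero]

lemma onSq_fst_add_onSq_snd_pos {ζ : Oct × Oct} (hζ : ζ ≠ 0) : 0 < onSq ζ.1 + onSq ζ.2 := by
  rcases eq_or_ne ζ.1 0 with h1 | h1
  · have h2 : ζ.2 ≠ 0 := fun h2 => hζ (Prod.ext h1 h2)
    exact add_pos_of_nonneg_of_pos (onSq_nonneg _) (onSq_pos.2 h2)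
  · exact add_pos_of_pos_of_nonneg (onSq_pos.2 h1) (onSq_nonneg _)

@[fun_prop]
lemma continuous_onSq : Continuous onSq := by
  rw [funext onSq_eq_norm_sq_add_norm_sq]
  fun_prop

lemma onSq_smul (c : ℝ) (a : Oct) : onSq (c • a) = c ^ 2 * onSq a := by
  simp only [onSq_eq_norm_sq_add_norm_sq, Prod.smul_fst, Prod.smul_snd, norm_smul, mul_pow,
    Real.norm_eq_abs, sq_abs]
  ring

lemma onSq_oconj (a : Oct) : onSq (oconj a) = onSq a := by
  simp [onSq_eq_norm_sq_add_norm_sq, oconj]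

lemma onSq_oR (r : ℝ) : onSq (oR r) = r ^ 2 := by
  simp [onSq_eq_norm_sq_add_norm_sq, oR]

lemma onSq_add (a b : Oct) : onSq (a + b) = onSq a + onSq b + 2 * oRe (omul (oconj a) b) := by
  simp only [onSq, oRe, omul, oconj, Prod.fst_add, Prod.snd_add, star_neg, star_star,
    Quaternion.re_sub, Quaternion.re_mul, Quaternion.re_add, Quaternion.imI_add,
    Quaternion.imJ_add, Quaternion.imK_add, Quaternion.re_neg, Quaternion.imI_neg,
    Quaternion.imJ_neg, Quaternion.imK_neg, Quaternion.re_star, Quaternion.imI_star,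
    Quaternion.imJ_star, Quaternion.imK_star]
  ring

lemma onSq_omul (a b : Oct) : onSq (omul a b) = onSq a * onSq b := by
  simp only [onSq, oRe, omul, oconj, Quaternion.re_sub, Quaternion.imI_sub, Quaternion.imJ_sub,
    Quaternion.imK_sub, Quaternion.re_add, Quaternion.imI_add, Quaternion.imJ_add,
    Quaternion.imK_add, Quaternion.re_mul, Quaternion.imI_mul, Quaternion.imJ_mul,
    Quaternion.imK_mul, Quaternion.re_neg, Quaternion.imI_neg, Quaternion.imJ_neg,
    Quaternion.imK_neg, Quaternion.re_star, Quaternion.imI_star, Quaternion.imJ_star,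
    Quaternion.imK_star]
  ring

lemma smul_oR (c r : ℝ) : c • oR r = oR (c * r) := by
  ext <;> simp [oR]

lemma oR_eq_zero {r : ℝ} : oR r = 0 ↔ r = 0 := by
  rw [← onSq_eq_zero, onSq_oR, sq_eq_zero_iff]

lemma zero_omul (a : Oct) : omul 0 a = 0 := by
  simp [omul]

lemma omul_zero (a : Oct) : omul a 0 = 0 := by
  simp [omul]

lemma oconj_smul (c : ℝ) (a : Oct) : oconj (c • a) = c • oconj a := by
  ext <;> simp [oconj]

lemma oconj_oconj (a : Oct) : oconj (oconj a) = a := by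
  simp [oconj]

lemma omul_oR (a : Oct) (r : ℝ) : omul a (oR r) = r • a := by
  ext <;> simp [omul, oR, mul_comm]

lemma oR_omul (r : ℝ) (a : Oct) : omul (oR r) a = r • a := by
  ext <;> simp [omul, oR, mul_comm]

lemma smul_omul (c : ℝ) (a b : Oct) : omul (c • a) b = c • omul a b := by
  simp [omul, smul_sub, smul_add]

lemma omul_smul (c : ℝ) (a b : Oct) : omul a (c • b) = c • omul a b := by
  simp [omul, smul_sub, smul_add]

lemma oRe_smul (c : ℝ) (a : Oct) : oRe (c • a) = c * oRe a := by
  simp [oRe]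

end Octonions

section PositiveDefinite

/-- The unit vectors of `𝕆²` with a coordinate in `ℝ · 1`. -/
def frameVectors : Set (Oct × Oct) :=
  {ζ | onSq ζ.1 + onSq ζ.2 = 1 ∧ ((∃ r : ℝ, ζ.1 = oR r) ∨ ∃ r : ℝ, ζ.2 = oR r)}

lemma oR_one_zero_mem_frameVectors : (oR 1, 0) ∈ frameVectors :=
  ⟨by simp [onSq_oR, onSq_zero], Or.inl ⟨1, rfl⟩⟩

lemma zero_oR_one_mem_frameVectors : (0, oR 1) ∈ frameVectors :=
  ⟨by simp [onSq_oR, onSq_zero], Or.inr ⟨1, rfl⟩⟩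

lemma smul_mem_frameVectors {c : ℝ} {ζ : Oct × Oct} (hc : c ^ 2 * (onSq ζ.1 + onSq ζ.2) = 1)
    (hreal : (∃ r : ℝ, ζ.1 = oR r) ∨ ∃ r : ℝ, ζ.2 = oR r) : c • ζ ∈ frameVectors := by
  refine ⟨?_, hreal.imp ?_ ?_⟩
  · rw [Prod.smul_fst, Prod.smul_snd, onSq_smul, onSq_smul, ← mul_add, hc]
  all_goals
    rintro ⟨r, hr⟩
    exact ⟨c * r, by simp [hr, smul_oR]⟩

lemma outerH_smul (c : ℝ) (ζ : Oct × Oct) : outerH (c • ζ) = c ^ 2 • outerH ζ := by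
  simp [outerH, onSq_smul, oconj_smul, smul_omul, omul_smul, smul_smul, sq]

lemma outerH_mem_hull_frameVectors {ζ : Oct × Oct}
    (hreal : (∃ r : ℝ, ζ.1 = oR r) ∨ ∃ r : ℝ, ζ.2 = oR r) :
    outerH ζ ∈ hull ℝ (outerH '' frameVectors) := by
  rcases eq_or_ne ζ 0 with rfl | h0
  · rw [← zero_smul ℝ (0 : Oct × Oct), outerH_smul, zero_pow two_ne_zero, zero_smul]
    exact zero_mem _
  have hpos := onSq_fst_add_onSq_snd_pos h0
  set n := onSq ζ.1 + onSq ζ.2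
  have hsq : (√n)⁻¹ ^ 2 = n⁻¹ := by rw [inv_pow, Real.sq_sqrt hpos.le]
  have hunit : (√n)⁻¹ • ζ ∈ frameVectors :=
    smul_mem_frameVectors (by rw [hsq]; exact inv_mul_cancel₀ hpos.ne') hreal
  have hscale : n • outerH ((√n)⁻¹ • ζ) = outerH ζ := by
    rw [outerH_smul, hsq, smul_inv_smul₀ hpos.ne']
  rw [← hscale]
  exact PointedCone.smul_mem _ hpos.le (subset_hull (mem_image_of_mem _ hunit))

lemma smul_outerH_add_smul_outerH {A : Herm} (hA : A.1 ≠ 0) :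
    A.1⁻¹ • outerH (oR A.1, oconj A.2.2) + (detH A / A.1) • outerH (0, oR 1) = A := by
  refine Prod.ext ?_ (Prod.ext ?_ ?_)
  · simp only [outerH, onSq_oR, onSq_zero, Prod.smul_mk, Prod.mk_add_mk, smul_eq_mul, mul_zero,
      add_zero]
    field_simp
  · simp only [outerH, onSq_oR, onSq_oconj, detH, Prod.smul_mk, Prod.mk_add_mk, smul_eq_mul,
      one_pow, mul_one]
    field_simp
    ring
  · simp [outerH, oconj_oconj, oR_omul, smul_smul, hA, zero_omul]

lemma fst_mul_qform (A : Herm) (ξ : Oct × Oct) :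
    A.1 * qform A ξ = onSq (A.1 • ξ.1 + omul A.2.2 ξ.2) + detH A * onSq ξ.2 := by
  rw [onSq_add, onSq_smul, oconj_smul, smul_omul, oRe_smul, onSq_omul, qform, detH]
  ring

lemma posDefH_iff_fst_pos_and_detH_pos {A : Herm} : PosDefH A ↔ 0 < A.1 ∧ 0 < detH A := by
  constructor
  · intro hA
    have hfst : 0 < A.1 := by
      simpa [qform, onSq_oR, onSq_zero, omul_zero, oRe] using hA (oR 1, 0) (by simp [oR_eq_zero])
    have hsquare := fst_mul_qform A (-A.2.2, oR A.1)
    have hq := hA (-A.2.2, oR A.1) (by simp [oR_eq_zero, hfst.ne'])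
    rw [omul_oR, smul_neg, neg_add_cancel, onSq_zero, zero_add, onSq_oR] at hsquare
    exact ⟨hfst, pos_of_mul_pos_left (hsquare ▸ mul_pos hfst hq) (sq_nonneg _)⟩
  · rintro ⟨hfst, hdet⟩ ξ hξ
    refine pos_of_mul_pos_right ?_ hfst.le
    rw [fst_mul_qform]
    rcases eq_or_ne ξ.2 0 with h2 | h2
    · have h1 : ξ.1 ≠ 0 := fun h1 => hξ (Prod.ext h1 h2)
      rw [h2, omul_zero, add_zero, onSq_zero, mul_zero, add_zero, onSq_smul]
      exact mul_pos (by positivity) (onSq_pos.2 h1)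
    · exact add_pos_of_nonneg_of_pos (onSq_nonneg _) (mul_pos hdet (onSq_pos.2 h2))

@[fun_prop]
lemma continuous_detH : Continuous detH := by
  unfold detH
  fun_prop

lemma isOpen_setOfPred_posDefH : IsOpen {A : Herm | PosDefH A} := by
  simp only [posDefH_iff_fst_pos_and_detH_pos, ofPred_and]
  exact (isOpen_lt continuous_const continuous_fst).inter
    (isOpen_lt continuous_const continuous_detH)

lemma PosDefH.mem_hull_frameVectors {A : Herm} (hA : PosDefH A) :
    A ∈ hull ℝ (outerH '' frameVectors) := by
  obtain ⟨hfst, hdet⟩ := posDefH_iff_fst_pos_and_detH_pos.1 hA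
  rw [← smul_outerH_add_smul_outerH hfst.ne']
  exact add_mem
    (PointedCone.smul_mem _ (by positivity) (outerH_mem_hull_frameVectors (Or.inl ⟨_, rfl⟩)))
    (PointedCone.smul_mem _ (by positivity) (outerH_mem_hull_frameVectors (Or.inr ⟨_, rfl⟩)))

lemma setOfPred_posDefH_subset_interior_hull :
    {A | PosDefH A} ⊆ interior (hull ℝ (outerH '' frameVectors) : Set Herm) :=
  interior_maximal (fun _ => PosDefH.mem_hull_frameVectors) isOpen_setOfPred_posDefH

end PositiveDefinite

section Spectrum

/-- The real roots of the characteristic polynomial of an octonionic Hermitian matrix. -/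
def spectrumH (A : Herm) : Set ℝ :=
  {t | t ^ 2 - (A.1 + A.2.1) * t + detH A = 0}

/-- The discriminant of the characteristic polynomial, in the form that is visibly nonnegative. -/
def discrH (A : Herm) : ℝ := (A.1 - A.2.1) ^ 2 + 4 * onSq A.2.2

/-- The smaller root of the characteristic polynomial. -/
def minEigenvalue (A : Herm) : ℝ := (A.1 + A.2.1 - √(discrH A)) / 2

/-- The larger root of the characteristic polynomial. -/
def maxEigenvalue (A : Herm) : ℝ := (A.1 + A.2.1 + √(discrH A)) / 2

lemma continuous_minEigenvalue : Continuous minEigenvalue := by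
  unfold minEigenvalue discrH
  fun_prop

lemma continuous_maxEigenvalue : Continuous maxEigenvalue := by
  unfold maxEigenvalue discrH
  fun_prop

lemma minEigenvalue_add_maxEigenvalue (A : Herm) :
    minEigenvalue A + maxEigenvalue A = A.1 + A.2.1 := by
  unfold minEigenvalue maxEigenvalue
  ring

lemma sq_sqrt_discrH (A : Herm) : √(discrH A) ^ 2 = discrH A :=
  Real.sq_sqrt (add_nonneg (sq_nonneg _) (mul_nonneg (by norm_num) (onSq_nonneg _)))

lemma minEigenvalue_mul_maxEigenvalue (A : Herm) :
    minEigenvalue A * maxEigenvalue A = detH A := by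
  have hsq := sq_sqrt_discrH A
  unfold minEigenvalue maxEigenvalue
  unfold discrH at *
  unfold detH
  linear_combination -hsq / 4

lemma spectrumH_eq (A : Herm) : spectrumH A = {minEigenvalue A, maxEigenvalue A} := by
  ext t
  have hfactor : t ^ 2 - (A.1 + A.2.1) * t + detH A =
      (t - minEigenvalue A) * (t - maxEigenvalue A) := by
    rw [← minEigenvalue_add_maxEigenvalue, ← minEigenvalue_mul_maxEigenvalue]
    ring
  simp [spectrumH, hfactor, sub_eq_zero]

lemma minEigenvalue_sq_add_maxEigenvalue_sq (A : Herm) :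
    minEigenvalue A ^ 2 + maxEigenvalue A ^ 2 = A.1 ^ 2 + A.2.1 ^ 2 + 2 * onSq A.2.2 := by
  have hdet : minEigenvalue A * maxEigenvalue A = A.1 * A.2.1 - onSq A.2.2 :=
    minEigenvalue_mul_maxEigenvalue A
  linear_combination
    (minEigenvalue A + maxEigenvalue A + A.1 + A.2.1) * minEigenvalue_add_maxEigenvalue A - 2 * hdet

lemma norm_le_abs_minEigenvalue_add_abs_maxEigenvalue (A : Herm) :
    ‖A‖ ≤ |minEigenvalue A| + |maxEigenvalue A| := by
  have hfrob := minEigenvalue_sq_add_maxEigenvalue_sq A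
  rw [onSq_eq_norm_sq_add_norm_sq] at hfrob
  have hbound (x : ℝ) (hx : x ^ 2 ≤ minEigenvalue A ^ 2 + maxEigenvalue A ^ 2) :
      |x| ≤ |minEigenvalue A| + |maxEigenvalue A| := by
    refine abs_le_of_sq_le_sq ?_ (by positivity)
    rw [add_sq, sq_abs, sq_abs]
    linarith [mul_nonneg (abs_nonneg (minEigenvalue A)) (abs_nonneg (maxEigenvalue A))]
  refine norm_prod_le_iff.2 ⟨hbound _ ?_, norm_prod_le_iff.2 ⟨hbound _ ?_, norm_prod_le_iff.2
    ⟨abs_norm A.2.2.1 ▸ hbound _ ?_, abs_norm A.2.2.2 ▸ hbound _ ?_⟩⟩⟩ <;> nlinarith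

lemma isCompact_setOfPred_spectrumH_subset_Icc (a b : ℝ) :
    IsCompact {A | spectrumH A ⊆ Icc a b} := by
  have heq : {A | spectrumH A ⊆ Icc a b} =
      minEigenvalue ⁻¹' Icc a b ∩ maxEigenvalue ⁻¹' Icc a b := by
    ext A
    simp only [spectrumH_eq, pair_subset_iff, mem_ofPred_eq, mem_inter_iff, mem_preimage]
  rw [heq]
  refine Metric.isCompact_of_isClosed_isBounded
    ((isClosed_Icc.preimage continuous_minEigenvalue).inter
      (isClosed_Icc.preimage continuous_maxEigenvalue))
    (isBounded_iff_forall_norm_le.2 ⟨max |a| |b| + max |a| |b|, fun A hA => ?_⟩)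
  exact (norm_le_abs_minEigenvalue_add_abs_maxEigenvalue A).trans
    (add_le_add (abs_le_max_abs_abs hA.1.1 hA.1.2) (abs_le_max_abs_abs hA.2.1 hA.2.2))

lemma posDefH_of_spectrumH_subset_Ioi {A : Herm} (hA : spectrumH A ⊆ Ioi 0) : PosDefH A := by
  rw [spectrumH_eq, pair_subset_iff] at hA
  obtain ⟨hmin, hmax⟩ := hA
  have hdet : 0 < A.1 * A.2.1 - onSq A.2.2 :=
    (mul_pos hmin hmax).trans_eq (minEigenvalue_mul_maxEigenvalue A)
  have htrace : 0 < A.1 + A.2.1 := (add_pos hmin hmax).trans_eq (minEigenvalue_add_maxEigenvalue A)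
  have hdiag : 0 < A.1 * A.2.1 := by linarith [onSq_nonneg A.2.2]
  refine posDefH_iff_fst_pos_and_detH_pos.2 ⟨?_, hdet⟩
  rcases mul_pos_iff.1 hdiag with h | h
  · exact h.1
  · linarith

end Spectrum

theorem rank_one_decomposition_general {K : Set Herm} (hK : IsCompact K)
    (hpos : ∀ A ∈ K, PosDefH A) :
    ∃ (N : ℕ) (ζ : Fin N → Oct × Oct) (lamS LamS : ℝ),
      0 < lamS ∧ lamS < LamS ∧
      (∀ k, onSq (ζ k).1 + onSq (ζ k).2 = 1) ∧
      (∀ k, (∃ r : ℝ, (ζ k).1 = oR r) ∨ (∃ r : ℝ, (ζ k).2 = oR r)) ∧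
      (∃ k, ζ k = (oR 1, 0)) ∧ (∃ k, ζ k = (0, oR 1)) ∧
      (∀ A ∈ K, ∃ β : Fin N → ℝ, (∀ k, β k ∈ Set.Icc lamS LamS) ∧
          A = ∑ k, β k • outerH (ζ k)) := by
  classical
  have hKv : K ⊆ interior (hull ℝ (range fun ζ : frameVectors => outerH ζ) : Set Herm) := by
    rw [← image_eq_range]
    exact fun A hA => setOfPred_posDefH_subset_interior_hull (hpos A hA)
  obtain ⟨N, ζ, m, M, hm, hmM, hS, hβ⟩ := exists_fin_sum_smul_eq_coeff_mem_Icc_of_isCompact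
    {⟨_, oR_one_zero_mem_frameVectors⟩, ⟨_, zero_oR_one_mem_frameVectors⟩} hK hKv
  obtain ⟨k₁, hk₁⟩ := hS ⟨_, oR_one_zero_mem_frameVectors⟩ (by simp)
  obtain ⟨k₂, hk₂⟩ := hS ⟨_, zero_oR_one_mem_frameVectors⟩ (by simp)
  exact ⟨N, fun k => ζ k, m, M, hm, hmM, fun k => (ζ k).2.1, fun k => (ζ k).2.2,
    ⟨k₁, congrArg Subtype.val hk₁⟩, ⟨k₂, congrArg Subtype.val hk₂⟩, hβ⟩

/-- Proposition 16.4: given 0 < λ < Λ there are finitely many unit vectors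
ζ₁, …, ζ_N ∈ 𝕆², each with at least one real coordinate and containing (1,0), (0,1),
and 0 < λ* < Λ* depending only on λ, Λ, such that every octonionic Hermitian matrix
with spectrum in [λ, Λ] is Σ_k β_k·(ζ_k ⊗ ζ_k*) with all β_k ∈ [λ*, Λ*]. -/
theorem rank_one_decomposition (lam Lam : ℝ) (hlam : 0 < lam) (hLam : lam < Lam) :
    ∃ (N : ℕ) (ζ : Fin N → Oct × Oct) (lamS LamS : ℝ),
      0 < lamS ∧ lamS < LamS ∧
      (∀ k, onSq (ζ k).1 + onSq (ζ k).2 = 1) ∧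
      (∀ k, (∃ r : ℝ, (ζ k).1 = oR r) ∨ (∃ r : ℝ, (ζ k).2 = oR r)) ∧
      (∃ k, ζ k = (oR 1, 0)) ∧ (∃ k, ζ k = (0, oR 1)) ∧
      (∀ A : Herm,
        (∀ t : ℝ, t ^ 2 - (A.1 + A.2.1) * t + detH A = 0 → t ∈ Set.Icc lam Lam) →
        ∃ β : Fin N → ℝ, (∀ k, β k ∈ Set.Icc lamS LamS) ∧
          A = ∑ k, β k • outerH (ζ k)) :=
  rank_one_decomposition_general (isCompact_setOfPred_spectrumH_subset_Icc lam Lam)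
    fun _ hA => posDefH_of_spectrumH_subset_Ioi fun _ ht => hlam.trans_le (hA _ ht).1
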